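/- arXiv:dg-ga/9609001 — 3 statements merged into one kernel-verified Lean document; each statement's English description precedes it below -/
import Mathlib

section
/- Let n ∈ ℕ and let A, B : ℝ → Matrix (Fin n) (Fin n) ℂ be families that are differentiable with continuous derivative, such that for every a ∈ ℝ the matrix A(a) is Hermitian and invertible, and B(a) · A(a)² = A(a)² · B(a). For a Hermitian invertible matrix M, a matrix C, and s ∈ ℝ, define η(M, C; s) := trace( C · f_s(M) ), where f_s(M) is obtained from M by the continuous functional calculus applied to the real function x ↦ |x|^{−(s+1)} (i.e. f_s(M) = (M²)^{−(s+1)/2}). Then for every a ∈ ℝ and every s ∈ ℝ: d/da η(A(a), B(a); s) = η(A(a), B′(a); s) − ((s+1)/2) · η(A(a), B(a) · (d/da A(a)²) · A(a)^{−2}; s), where d/da A(a)² = A′(a)·A(a) + A(a)·A′(a). -/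
/-!
Since `x ↦ |x| ^ (-(s + 1))` is even, `|A| ^ (-(s + 1)) = φ(H)` with `H = A ^ 2` positive definite
and `φ(t) = t ^ (-(s + 1) / 2)`, so it suffices to differentiate `tr (B φ(H))` at `a`
(`hasDerivAt_trace_mul_cfc`). Choose a polynomial `q` agreeing with `φ` to first order at every
eigenvalue of `H a` (`exists_hermite`), and write `φ = q + ψ`.

* For `q` the product rule applies, and cyclicity of the trace together with the commutation of
  `B a` and `H a` gives the term `tr (B q'(H) H') = tr (B φ'(H) H')` (`hasDerivAt_aeval`).
* The remainder `ψ(H b)` is `o(b - a)` in operator norm (`hasDerivAt_cfc_zero`): the eigenvalues of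
  `H b` stay within `‖H b - H a‖ = O(b - a)` of those of `H a` (`exists_spectrum_near`), at which
  `ψ` and `ψ'` vanish.

Finally `φ'(t) = -(s + 1) / 2 * t⁻¹ * φ(t)` on the positive spectrum of `H a` (`cfc_deriv_rpow`).
The matrix functional calculus used throughout is Mathlib's `cfc`, and norms are operator norms.
-/

open Matrix

/-- Continuous functional calculus for a Hermitian matrix `M`: apply the real
function `g` to the eigenvalues of `M` in a unitary diagonalization. -/
noncomputable def hermCFC {n : ℕ} {M : Matrix (Fin n) (Fin n) ℂ}
    (hM : M.IsHermitian) (g : ℝ → ℝ) : Matrix (Fin n) (Fin n) ℂ :=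
  (hM.eigenvectorUnitary : Matrix (Fin n) (Fin n) ℂ) *
    Matrix.diagonal (fun i => (g (hM.eigenvalues i) : ℂ)) *
    star (hM.eigenvectorUnitary : Matrix (Fin n) (Fin n) ℂ)

section Helpers

open Polynomial Filter Topology
open scoped Matrix.Norms.L2Operator

/-- Hermite interpolation to first order: on a finite set of nodes a real polynomial can be given
prescribed values and prescribed first derivatives. -/
theorem exists_hermite (S : Finset ℝ) (f f' : ℝ → ℝ) :
    ∃ q : ℝ[X], ∀ x ∈ S, q.eval x = f x ∧ (derivative q).eval x = f' x := by
  -- `L` interpolates the values; a multiple of the nodal polynomial corrects the derivatives.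
  set L := Lagrange.interpolate S id f
  set w := Lagrange.nodal S (id : ℝ → ℝ)
  set M := Lagrange.interpolate S id
    (fun x => (f' x - (derivative L).eval x) / (derivative w).eval x)
  refine ⟨L + w * M, fun x hx => ?_⟩
  have hL : L.eval x = f x := Lagrange.eval_interpolate_at_node f (Set.injOn_id _) hx
  have hw : w.eval x = 0 := Lagrange.eval_nodal_at_node (v := (id : ℝ → ℝ)) hx
  have hM : M.eval x = (f' x - (derivative L).eval x) / (derivative w).eval x :=
    Lagrange.eval_interpolate_at_node _ (Set.injOn_id _) hx
  have hw' : (derivative w).eval x ≠ 0 := by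
    have h := Lagrange.eval_nodal_derivative_eval_node_eq (v := (id : ℝ → ℝ)) hx
    simp only [id] at h
    rw [h, Lagrange.eval_nodal, Finset.prod_ne_zero_iff]
    intro y hy
    simp only [id, sub_ne_zero]
    exact (Finset.ne_of_mem_erase hy).symm
  refine ⟨by simp [hL, hw], ?_⟩
  simp only [derivative_add, derivative_mul, eval_add, eval_mul, hw, hM, zero_mul, add_zero]
  field_simp
  ring

variable {n : ℕ}

/-- Matrix-valued differentiability for the operator norm follows from differentiability of the
entries. -/
theorem hasDerivAt_of_entries {A : ℝ → Matrix (Fin n) (Fin n) ℂ} {A' : Matrix (Fin n) (Fin n) ℂ}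
    {a : ℝ} (h : ∀ i j, HasDerivAt (fun b => A b i j) (A' i j) a) : HasDerivAt A A' a := by
  have key : ∀ M : Matrix (Fin n) (Fin n) ℂ,
      M = ∑ i, ∑ j, M i j • Matrix.single i j (1 : ℂ) := fun M => by
    conv_lhs => rw [Matrix.matrix_eq_sum_single M]
    simp [Matrix.smul_single]
  rw [show A = fun b => ∑ i, ∑ j, A b i j • Matrix.single i j (1 : ℂ) from funext fun b => key _,
    key A']
  exact HasDerivAt.fun_sum fun i _ => HasDerivAt.fun_sum fun j _ => (h i j).smul_const _

theorem HasDerivAt.matrix_trace {F : ℝ → Matrix (Fin n) (Fin n) ℂ}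
    {F' : Matrix (Fin n) (Fin n) ℂ} {a : ℝ} (h : HasDerivAt F F' a) :
    HasDerivAt (fun b => (F b).trace) F'.trace a :=
  ((LinearMap.toContinuousLinearMap
    (Matrix.traceLinearMap (Fin n) ℝ ℂ)).hasFDerivAt.comp_hasDerivAt a h)

theorem HasDerivAt.matrix_sq {F : ℝ → Matrix (Fin n) (Fin n) ℂ}
    {F' : Matrix (Fin n) (Fin n) ℂ} {a : ℝ} (h : HasDerivAt F F' a) :
    HasDerivAt (fun b => F b ^ 2) (F' * F a + F a * F') a := by
  simp only [pow_two]
  exact h.fun_mul h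

/-- The spectrum of a Hermitian matrix moves by at most the norm of the perturbation. -/
theorem exists_spectrum_near {H K : Matrix (Fin n) (Fin n) ℂ} (hH : IsSelfAdjoint H)
    {y : ℝ} (hy : y ∈ spectrum ℝ K) : ∃ x ∈ spectrum ℝ H, |y - x| ≤ ‖K - H‖ := by
  by_contra! hcon
  rcases (norm_nonneg (K - H)).eq_or_lt with h0 | hpos
  · have hKH : K = H := sub_eq_zero.mp (norm_eq_zero.mp h0.symm)
    have := hcon y (hKH ▸ hy)
    simp [← h0] at this
  have hc : ∀ f : ℝ → ℝ, ContinuousOn f (spectrum ℝ H) := fun f =>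
    (Matrix.finite_real_spectrum (A := H)).continuousOn f
  have hne : ∀ x ∈ spectrum ℝ H, y - x ≠ 0 := fun x hx =>
    abs_pos.mp (hpos.trans (hcon x hx))
  -- the resolvent of `H` at `y`, whose norm is below `1 / ‖K - H‖`
  set R := cfc (fun x => (y - x)⁻¹) H with hR
  have hRn : ‖R‖ < ‖K - H‖⁻¹ := by
    refine norm_cfc_lt (inv_pos.mpr hpos) fun x hx => ?_
    rw [norm_inv, Real.norm_eq_abs]
    exact inv_strictAnti₀ hpos (hcon x hx)
  have hR1 : R * (algebraMap ℝ _ y - H) = 1 := by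
    have h1 : algebraMap ℝ _ y - H = cfc (fun x => y - x) H := by
      rw [cfc_sub (fun _ => y) (fun x => x) H (hc _) (hc _), cfc_const y H, cfc_id' ℝ H]
    rw [h1, hR, ← cfc_mul _ _ H (hc _) (hc _), ← cfc_one ℝ H]
    exact cfc_congr fun x hx => inv_mul_cancel₀ (hne x hx)
  have hlt : ‖R * (K - H)‖ < 1 := by
    calc ‖R * (K - H)‖ ≤ ‖R‖ * ‖K - H‖ := norm_mul_le _ _
      _ < ‖K - H‖⁻¹ * ‖K - H‖ := by gcongr
      _ = 1 := inv_mul_cancel₀ hpos.ne'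
  have hprod : R * (algebraMap ℝ _ y - K) = 1 - R * (K - H) := by
    rw [← hR1]; noncomm_ring
  have hu : IsUnit (R * (algebraMap ℝ _ y - K)) := by
    rw [hprod]; exact isUnit_one_sub_of_norm_lt_one hlt
  exact hy (isUnit_of_mul_isUnit_right hu)

/-- A polynomial `q(H b)` of a differentiable matrix family is differentiable. Since `H a` and `H'`
need not commute, its derivative is in general not `q'(H a) * H'`, but by cyclicity of the trace the
two agree when traced against any matrix commuting with `H a`. -/
theorem hasDerivAt_aeval {H : ℝ → Matrix (Fin n) (Fin n) ℂ} {H' : Matrix (Fin n) (Fin n) ℂ}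
    {a : ℝ} (hH : HasDerivAt H H' a) (q : ℝ[X]) :
    ∃ Q', HasDerivAt (fun b => aeval (H b) q) Q' a ∧
      ∀ C, Commute C (H a) → (C * Q').trace = (C * aeval (H a) (derivative q) * H').trace := by
  have step : ∀ p : ℝ[X], (∃ Q', HasDerivAt (fun b => aeval (H b) p) Q' a ∧
      ∀ C, Commute C (H a) → (C * Q').trace = (C * aeval (H a) (derivative p) * H').trace) →
      (∃ Q', HasDerivAt (fun b => aeval (H b) (p * X)) Q' a ∧
      ∀ C, Commute C (H a) →
        (C * Q').trace = (C * aeval (H a) (derivative (p * X)) * H').trace) := by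
    rintro p ⟨Q', hQ, hC⟩
    refine ⟨Q' * H a + aeval (H a) p * H', ?_, fun C hCH => ?_⟩
    · simp only [map_mul, aeval_X]
      exact hQ.fun_mul hH
    · have h1 : (C * (Q' * H a)).trace = (H a * C * Q').trace := by
        rw [← mul_assoc, Matrix.trace_mul_comm, mul_assoc]
      have h2 := hC (H a * C) ((Commute.refl (H a)).mul_left hCH)
      have h3 : Commute (H a) (aeval (H a) (derivative p)) := by
        have := Commute.all X (derivative p)
        simpa using this.map (aeval (R := ℝ) (H a))
      rw [mul_add, Matrix.trace_add, h1, h2, ← hCH.eq, mul_assoc C (H a), h3.eq, ← Matrix.trace_add]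
      congr 1
      simp
      noncomm_ring
  induction q using Polynomial.induction_on with
  | C r =>
    refine ⟨0, ?_, fun C _ => by simp⟩
    simpa using hasDerivAt_const a (algebraMap ℝ (Matrix (Fin n) (Fin n) ℂ) r)
  | add p q hp hq =>
    obtain ⟨P', hP, hPC⟩ := hp
    obtain ⟨Q', hQ, hQC⟩ := hq
    refine ⟨P' + Q', by simp only [map_add]; exact hP.fun_add hQ, fun C hC => ?_⟩
    simp [mul_add, add_mul, hPC C hC, hQC C hC]
  | monomial k r ih =>
    rw [pow_succ, ← mul_assoc]
    exact step _ ih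

/-- If `ψ` and `ψ'` vanish on the spectrum of `H a`, then `ψ(H b)` vanishes to first order at
`b = a`: eigenvalues of `H b` lie within `O(b - a)` of those of `H a`, where `ψ` is `o(b - a)`. -/
theorem hasDerivAt_cfc_zero {H : ℝ → Matrix (Fin n) (Fin n) ℂ} {H' : Matrix (Fin n) (Fin n) ℂ}
    {a : ℝ} (hH : HasDerivAt H H' a) (hsa : ∀ b, IsSelfAdjoint (H b)) {ψ : ℝ → ℝ}
    (hψ0 : ∀ x ∈ spectrum ℝ (H a), ψ x = 0)
    (hψ : ∀ x ∈ spectrum ℝ (H a), HasDerivAt ψ 0 x) :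
    HasDerivAt (fun b => cfc ψ (H b)) 0 a := by
  have h0 : cfc ψ (H a) = 0 := by
    rw [← cfc_zero ℝ (H a)]
    exact cfc_congr fun x hx => hψ0 x hx
  rw [hasDerivAt_iff_isLittleO, Asymptotics.isLittleO_iff]
  intro ε hε
  obtain ⟨c, hc, hO⟩ := hH.isBigO_sub.exists_pos
  have hO := hO.bound
  -- finitely many nodes, hence one radius serves them all
  have hψ' : ∀ᶠ t in 𝓝 (0 : ℝ), ∀ x ∈ spectrum ℝ (H a), |ψ (x + t)| ≤ ε / c * |t| := by
    rw [Matrix.finite_real_spectrum.eventually_all]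
    intro x hx
    have h := hasDerivAt_iff_isLittleO_nhds_zero.mp (hψ x hx)
    filter_upwards [h.bound (div_pos hε hc)] with t ht
    simpa [hψ0 x hx] using ht
  obtain ⟨δ, hδ, hball⟩ := Metric.eventually_nhds_iff.mp hψ'
  have hcont : ∀ᶠ b in 𝓝 a, ‖H b - H a‖ < δ := by
    have := Metric.tendsto_nhds.mp hH.continuousAt δ hδ
    simpa [dist_eq_norm] using this
  filter_upwards [hO, hcont] with b hb hbδ
  rw [h0]
  simp only [sub_zero, smul_zero]
  refine norm_cfc_le (by positivity) fun y hy => ?_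
  obtain ⟨x, hx, hxy⟩ := exists_spectrum_near (hsa a) hy
  have h1 := hball (y := y - x) (by simpa using hxy.trans_lt hbδ) x hx
  rw [add_sub_cancel] at h1
  calc ‖ψ y‖ ≤ ε / c * |y - x| := h1
    _ ≤ ε / c * (c * ‖b - a‖) := by gcongr; exact hxy.trans hb
    _ = ε * ‖b - a‖ := by field_simp

/-- Variation formula for the trace of a function of a Hermitian family `H` against a family `B`
commuting with `H` at the base point. -/
theorem hasDerivAt_trace_mul_cfc {H B : ℝ → Matrix (Fin n) (Fin n) ℂ}
    {H' B' : Matrix (Fin n) (Fin n) ℂ} {a : ℝ} (hH : HasDerivAt H H' a) (hB : HasDerivAt B B' a)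
    (hsa : ∀ b, IsSelfAdjoint (H b)) (hcomm : Commute (B a) (H a)) {φ φ' : ℝ → ℝ}
    (hφ : ∀ x ∈ spectrum ℝ (H a), HasDerivAt φ (φ' x) x) :
    HasDerivAt (fun b => (B b * cfc φ (H b)).trace)
      ((B' * cfc φ (H a)).trace + (B a * cfc φ' (H a) * H').trace) a := by
  obtain ⟨q, hq⟩ := exists_hermite (Matrix.finite_real_spectrum (A := H a)).toFinset φ φ'
  simp only [Set.Finite.mem_toFinset] at hq
  have hc : ∀ (b : ℝ) (f : ℝ → ℝ), ContinuousOn f (spectrum ℝ (H b)) := fun b f =>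
    (Matrix.finite_real_spectrum (A := H b)).continuousOn f
  obtain ⟨Q', hQ, hQC⟩ := hasDerivAt_aeval hH q
  have hψ := hasDerivAt_cfc_zero hH hsa (ψ := fun x => φ x - q.eval x)
    (fun x hx => by simp [(hq x hx).1])
    (fun x hx => by
      have h := (hφ x hx).fun_sub (q.hasDerivAt x)
      rwa [(hq x hx).2, sub_self] at h)
  have hsplit : ∀ b, cfc φ (H b) = aeval (H b) q + cfc (fun x => φ x - q.eval x) (H b) := by
    intro b
    rw [cfc_sub φ (fun x => q.eval x) (H b) (hc b _) (hc b _), cfc_polynomial q (H b) (hsa b)]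
    abel
  have e' : cfc φ' (H a) = aeval (H a) (derivative q) := by
    rw [← cfc_polynomial _ (H a) (hsa a)]
    exact cfc_congr fun x hx => (hq x hx).2.symm
  have hmain := (hB.mul (hQ.add hψ)).matrix_trace
  convert hmain using 1
  · funext b
    simp [hsplit b]
  · simp [hsplit a, e', ← hQC _ hcomm, Matrix.trace_add]


theorem hermCFC_eq_cfc {M : Matrix (Fin n) (Fin n) ℂ} (hM : M.IsHermitian) (g : ℝ → ℝ) :
    hermCFC hM g = cfc g M := by
  rw [hM.cfc_eq, Matrix.IsHermitian.cfc, Unitary.conjStarAlgAut_apply]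
  rfl

/-- The function `|x| ^ r` is even, so it is a function of the square of the matrix. -/
theorem cfc_abs_rpow {M : Matrix (Fin n) (Fin n) ℂ} (hM : M.IsHermitian) (r : ℝ) :
    cfc (fun x : ℝ => |x| ^ r) M = cfc (fun t : ℝ => t ^ (r / 2)) (M ^ 2) := by
  rw [← cfc_comp_pow (fun t : ℝ => t ^ (r / 2)) 2 M
    (((Matrix.finite_real_spectrum (A := M)).image _).continuousOn _) hM.isSelfAdjoint]
  congr 1
  funext x
  rw [← sq_abs, ← Real.rpow_natCast_mul (abs_nonneg x)]
  congr 1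
  push_cast
  ring

/-- The square of an invertible Hermitian matrix has positive spectrum. -/
theorem pos_of_mem_spectrum_sq {M : Matrix (Fin n) (Fin n) ℂ} (hM : M.IsHermitian)
    (hu : IsUnit M) {x : ℝ} (hx : x ∈ spectrum ℝ (M ^ 2)) : 0 < x := by
  have h0 : (0 : ℝ) ∉ spectrum ℝ (M ^ 2) := spectrum.zero_notMem ℝ (hu.pow 2)
  rw [← cfc_pow_id (R := ℝ) M 2 hM.isSelfAdjoint, cfc_map_spectrum (R := ℝ) _ M
    hM.isSelfAdjoint ((Matrix.finite_real_spectrum (A := M)).continuousOn _)] at hx h0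
  obtain ⟨y, hy, rfl⟩ := hx
  have hne : y ≠ 0 := by
    rintro rfl
    exact h0 ⟨0, hy, by simp⟩
  positivity

/-- The derivative of `t ^ p` applied to `H`, as it occurs in the variation formula. -/
theorem cfc_deriv_rpow {H : Matrix (Fin n) (Fin n) ℂ} (hH : IsSelfAdjoint H) (hu : IsUnit H)
    (hpos : ∀ x ∈ spectrum ℝ H, 0 < x) (p : ℝ) :
    cfc (fun t : ℝ => p * t ^ (p - 1)) H = (p : ℂ) • (H⁻¹ * cfc (fun t : ℝ => t ^ p) H) := by
  have hc : ∀ f : ℝ → ℝ, ContinuousOn f (spectrum ℝ H) := fun f =>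
    (Matrix.finite_real_spectrum (A := H)).continuousOn f
  have hdet : IsUnit H.det := (Matrix.isUnit_iff_isUnit_det H).mp hu
  have key : H * cfc (fun t : ℝ => p * t ^ (p - 1)) H = (p : ℂ) • cfc (fun t : ℝ => t ^ p) H := by
    conv_lhs => enter [1]; rw [← cfc_id' ℝ H]
    rw [← cfc_mul _ _ H (hc _) (hc _), Complex.coe_smul, ← cfc_smul p _ H (hc _)]
    refine cfc_congr fun x hx => ?_
    simp only [smul_eq_mul]
    rw [Real.rpow_sub_one (hpos x hx).ne']
    field_simp [(hpos x hx).ne']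
  rw [← Matrix.mul_smul, ← key, ← mul_assoc, Matrix.nonsing_inv_mul H hdet, one_mul]

end Helpers

/-- Finite-dimensional variation formula for the generalized
η-function `η(M, C; s) = tr(C · (M²)^{-(s+1)/2}) = tr(C · |M|^{-(s+1)})`:
for `C¹` families `a ↦ A(a)`, `a ↦ B(a)` with `A(a)` Hermitian invertible and
`B(a)` commuting with `A(a)²`,
`d/da η(A(a), B(a); s) = η(A(a), B'(a); s)
  - ((s+1)/2) · η(A(a), B(a)·(d/da A(a)²)·A(a)^{-2}; s)`,
where `d/da A(a)² = A'(a)A(a) + A(a)A'(a)`. -/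
theorem statement10 (n : ℕ) (A B A' B' : ℝ → Matrix (Fin n) (Fin n) ℂ)
    (hA : ∀ (a : ℝ) (i j : Fin n), HasDerivAt (fun b => A b i j) (A' a i j) a)
    (hA' : ∀ i j : Fin n, Continuous fun a => A' a i j)
    (hB : ∀ (a : ℝ) (i j : Fin n), HasDerivAt (fun b => B b i j) (B' a i j) a)
    (hB' : ∀ i j : Fin n, Continuous fun a => B' a i j)
    (hherm : ∀ a : ℝ, (A a).IsHermitian)
    (hinv : ∀ a : ℝ, IsUnit (A a))
    (hcomm : ∀ a : ℝ, B a * (A a) ^ 2 = (A a) ^ 2 * B a) :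
    ∀ a s : ℝ,
      HasDerivAt
        (fun b : ℝ =>
          (B b * hermCFC (hherm b) (fun x => |x| ^ (-(s + 1)))).trace)
        ((B' a * hermCFC (hherm a) (fun x => |x| ^ (-(s + 1)))).trace
          - ((s + 1) / 2 : ℂ) *
            ((B a * (A' a * A a + A a * A' a) * ((A a) ^ 2)⁻¹) *
              hermCFC (hherm a) (fun x => |x| ^ (-(s + 1)))).trace)
        a := by
  intro a s
  have hsa : ∀ b, IsSelfAdjoint (A b ^ 2) := fun b => (hherm b).isSelfAdjoint.pow 2
  have hunit : IsUnit (A a ^ 2) := (hinv a).pow 2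
  have hpos : ∀ x ∈ spectrum ℝ (A a ^ 2), 0 < x := fun x hx =>
    pos_of_mem_spectrum_sq (hherm a) (hinv a) hx
  have hH : HasDerivAt (fun b => A b ^ 2) (A' a * A a + A a * A' a) a :=
    (hasDerivAt_of_entries (hA a)).matrix_sq
  have hBa : HasDerivAt B (B' a) a := hasDerivAt_of_entries (hB a)
  have hmain := hasDerivAt_trace_mul_cfc hH hBa hsa (hcomm a)
    (φ := fun t => t ^ (-(s + 1) / 2))
    (φ' := fun t => -(s + 1) / 2 * t ^ (-(s + 1) / 2 - 1))
    (fun x hx => Real.hasDerivAt_rpow_const (Or.inl (hpos x hx).ne'))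
  simp only [hermCFC_eq_cfc, cfc_abs_rpow (hherm _)]
  convert hmain using 1
  rw [cfc_deriv_rpow (hsa a) hunit hpos]
  set Φ := cfc (fun t : ℝ => t ^ (-(s + 1) / 2)) (A a ^ 2)
  set D := A' a * A a + A a * A' a
  have hBΦ : Commute Φ (B a) := Commute.cfc_real (hcomm a).symm _
  have hBinv : Commute (A a ^ 2)⁻¹ (B a) := by
    have hdet := (Matrix.isUnit_iff_isUnit_det _).mp hunit
    calc (A a ^ 2)⁻¹ * B a = (A a ^ 2)⁻¹ * (B a * A a ^ 2) * (A a ^ 2)⁻¹ := by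
          rw [mul_assoc, mul_assoc (B a), Matrix.mul_nonsing_inv _ hdet, mul_one]
      _ = B a * (A a ^ 2)⁻¹ := by
          rw [hcomm a, ← mul_assoc, Matrix.nonsing_inv_mul _ hdet, one_mul]
  -- cyclicity moves `D` to the end; the rest commutes with `B a`
  have htr : (B a * D * (A a ^ 2)⁻¹ * Φ).trace = (B a * ((A a ^ 2)⁻¹ * Φ) * D).trace := by
    rw [← (hBinv.mul_left hBΦ).eq, mul_assoc (_ * Φ), Matrix.trace_mul_comm (_ * Φ), mul_assoc _ _ Φ]
  rw [htr, sub_eq_add_neg]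
  congr 1
  rw [Matrix.mul_smul, Matrix.smul_mul, Matrix.trace_smul, smul_eq_mul]
  push_cast
  ring
end

section
/- Let n ∈ ℕ, let A ∈ Matrix (Fin n) (Fin n) ℂ be Hermitian, let P₀ ∈ Matrix (Fin n) (Fin n) ℂ satisfy P₀ᴴ = P₀, P₀² = P₀, A·P₀ = 0, and rank P₀ + rank A = n (so that P₀ is the orthogonal projection onto ker A). Let B ∈ Matrix (Fin n) (Fin n) ℂ satisfy B·A² = A²·B and P₀·B·P₀ = 0. Then (1 − P₀)·B·(1 − P₀) = B. -/
/-!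
By the rank hypothesis the range of `P₀` is all of `ker A`. Since `A` is Hermitian,
`ker A² = ker A`; a matrix commuting with `A²` preserves this kernel, so `B P₀ = P₀ B P₀ = 0`
(`mul_proj_eq_zero`). The hypotheses are stable under `B ↦ Bᴴ`, so also `Bᴴ P₀ = 0`, that is
`P₀ B = 0`, and expanding `(1 - P₀) B (1 - P₀)` leaves `B`.
-/

open Matrix

/-- An idempotent `P` with `A * P = 0` and complementary rank has range exactly `ker A`, so it
fixes every matrix whose columns lie in `ker A`. -/
lemma proj_mul_eq_of_mul_eq_zero {n : ℕ} {A P X : Matrix (Fin n) (Fin n) ℂ}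
    (hP : P ^ 2 = P) (hAP : A * P = 0) (hrank : P.rank + A.rank = n) (hX : A * X = 0) :
    P * X = X := by
  have hle : LinearMap.range P.mulVecLin ≤ LinearMap.ker A.mulVecLin := by
    rintro _ ⟨v, rfl⟩
    simp [Matrix.mulVec_mulVec, hAP]
  have heq : LinearMap.range P.mulVecLin = LinearMap.ker A.mulVecLin := by
    apply Submodule.eq_of_le_of_finrank_eq hle
    have h := A.mulVecLin.finrank_range_add_finrank_ker
    simp only [Module.finrank_fintype_fun_eq_card, Fintype.card_fin] at h
    simp only [Matrix.rank] at hrank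
    omega
  apply Matrix.ext_of_mulVec_single
  intro i
  have hmem : X *ᵥ Pi.single i 1 ∈ LinearMap.range P.mulVecLin := by
    rw [heq]
    simp only [LinearMap.mem_ker, Matrix.mulVecLin_apply, Matrix.mulVec_mulVec, hX,
      Matrix.zero_mulVec]
  obtain ⟨w, hw⟩ := hmem
  rw [Matrix.mulVecLin_apply] at hw
  rw [← Matrix.mulVec_mulVec, ← hw, Matrix.mulVec_mulVec, ← sq, hP]

open scoped ComplexOrder in
lemma mul_proj_eq_zero {n : ℕ} {A P B : Matrix (Fin n) (Fin n) ℂ} (hA : A.IsHermitian)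
    (hP : P ^ 2 = P) (hAP : A * P = 0) (hrank : P.rank + A.rank = n)
    (hcomm : B * A ^ 2 = A ^ 2 * B) (hPBP : P * B * P = 0) : B * P = 0 := by
  have h2 : Aᴴ * A * (B * P) = 0 := by
    rw [hA.eq, ← sq, ← mul_assoc, ← hcomm, sq, mul_assoc, mul_assoc, hAP, mul_zero, mul_zero]
  rw [Matrix.conjTranspose_mul_self_mul_eq_zero] at h2
  rw [← proj_mul_eq_of_mul_eq_zero hP hAP hrank h2, ← mul_assoc, hPBP]


/-- If `A` is Hermitian, `P₀` is the orthogonal projection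
onto `ker A` (a Hermitian idempotent with `A·P₀ = 0` and
`rank P₀ + rank A = n`), and `B` commutes with `A²` and satisfies
`P₀·B·P₀ = 0`, then `(1 - P₀)·B·(1 - P₀) = B`. -/
theorem statement12 (n : ℕ) (A P₀ B : Matrix (Fin n) (Fin n) ℂ)
    (hA : A.IsHermitian)
    (hP₀herm : P₀ᴴ = P₀) (hP₀idem : P₀ ^ 2 = P₀) (hAP₀ : A * P₀ = 0)
    (hrank : P₀.rank + A.rank = n)
    (hcomm : B * A ^ 2 = A ^ 2 * B) (hPBP : P₀ * B * P₀ = 0) :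
    (1 - P₀) * B * (1 - P₀) = B := by
  have h1 : B * P₀ = 0 := mul_proj_eq_zero hA hP₀idem hAP₀ hrank hcomm hPBP
  have h2 : Bᴴ * P₀ = 0 := by
    apply mul_proj_eq_zero hA hP₀idem hAP₀ hrank
    · have h := congrArg conjTranspose hcomm
      simp only [conjTranspose_mul, conjTranspose_pow, hA.eq] at h
      exact h.symm
    · have h := congrArg conjTranspose hPBP
      simpa only [conjTranspose_mul, hP₀herm, conjTranspose_zero, mul_assoc] using h
  have h3 : P₀ * B = 0 := by
    have h := congrArg conjTranspose h2
    simpa only [conjTranspose_mul, hP₀herm, conjTranspose_conjTranspose, conjTranspose_zero]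
      using h
  rw [sub_mul, one_mul, h3, sub_zero, mul_sub, mul_one, h1, sub_zero]
end

section
/- Let n ∈ ℕ and let A : ℝ → Matrix (Fin n) (Fin n) ℂ be a family that is differentiable with continuous derivative, such that A(a) is Hermitian for every a ∈ ℝ and the rank of A(a) is constant in a (equivalently, dim ker A(a) is constant). Then there exists a family P : ℝ → Matrix (Fin n) (Fin n) ℂ, differentiable with continuous derivative, such that for every a: P(a)ᴴ = P(a), P(a)² = P(a), A(a)·P(a) = 0, and rank P(a) = n − rank A(a) (so P(a) is the orthogonal projection onto ker A(a)); moreover the family Ã(a) := (1 − P(a))·A(a) + P(a) is differentiable with continuous derivative and Ã(a) is invertible for every a. -/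
/-! The nonzero eigenvalues of `A(a)` are counted with multiplicity by the rank `r`, so the
characteristic polynomial factors as `χ = X ^ m * q` with `m = n - r` fixed and `q(0) ≠ 0`
(`charpoly_factor`). By Cayley–Hamilton `A ^ m * q(A) = 0`, and since `A` is Hermitian this improves
to `A * q(A) = 0`. Writing `q = q(0) + X * h`, the matrix `P = q(A) / q(0)` satisfies `A * P = 0` and
`P - 1 ∈ A * ℂ[A]`, which makes it the orthogonal projection onto `ker A` (`projection_props`).

The coefficients of `q` are coefficients of `χ`, hence polynomials in the entries of `A(a)`. As `m` does
not depend on `a`, the formula for `P(a)` is polynomial in the entries of `A(a)` up to division by the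
nowhere vanishing coefficient `χ_m`, so `P` is `C¹` along with `A`. -/

open Matrix Polynomial

/-- For a Hermitian matrix, the order of vanishing of the characteristic polynomial at `0` is the
dimension of the kernel. -/
lemma charpoly_factor {n : ℕ} {A : Matrix (Fin n) (Fin n) ℂ} (hA : A.IsHermitian) :
    ∃ q : ℂ[X], A.charpoly = X ^ (n - A.rank) * q ∧ q.coeff 0 ≠ 0 := by
  classical
  refine ⟨∏ i with hA.eigenvalues i ≠ 0, (X - C (hA.eigenvalues i : ℂ)), ?_, ?_⟩
  · rw [hA.charpoly_eq, ← Finset.prod_filter_not_mul_prod_filter _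
      (fun i => hA.eigenvalues i ≠ 0)]
    congr 1
    have hcard : n - A.rank = (Finset.univ.filter fun i => ¬ hA.eigenvalues i ≠ 0).card := by
      have h := Finset.card_filter_add_card_filter_not (s := (Finset.univ : Finset (Fin n)))
        (fun i => hA.eigenvalues i ≠ 0)
      rw [hA.rank_eq_card_non_zero_eigs, Fintype.card_subtype]
      simp only [Finset.card_univ, Fintype.card_fin] at h
      omega
    rw [hcard, ← Finset.prod_const]
    refine Finset.prod_congr rfl fun i hi => ?_
    have h0 : hA.eigenvalues i = 0 := by simpa using hi
    simp [h0]
  · rw [coeff_zero_eq_eval_zero, eval_prod, Finset.prod_ne_zero_iff]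
    intro i hi
    simpa using hi

open scoped ComplexOrder in
lemma mul_eq_zero_of_pow_mul_eq_zero {n : ℕ} {A B : Matrix (Fin n) (Fin n) ℂ}
    (hA : A.IsHermitian) (m : ℕ) (h : A ^ m * B = 0) : A * B = 0 := by
  induction m with
  | zero =>
    have hB : B = 0 := by simpa using h
    simp [hB]
  | succ k ih =>
    rcases k with _ | k
    · simpa using h
    · refine ih ?_
      have h2 : (Aᴴ * A) * (A ^ k * B) = 0 := by
        rw [hA.eq, ← h, pow_succ' A (k + 1), pow_succ' A k]
        simp only [Matrix.mul_assoc]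
      rw [pow_succ', Matrix.mul_assoc]
      exact (conjTranspose_mul_self_mul_eq_zero A _).1 h2

/-- A matrix `P` annihilated by a Hermitian `A` and congruent to `1` modulo multiples of `A` that
commute with `A` is the orthogonal projection onto `ker A`; moreover `(1 - P) * A + P` is
invertible, with inverse `P + (1 - P) * h`. -/
lemma projection_props {n : ℕ} {A P h : Matrix (Fin n) (Fin n) ℂ} (hA : A.IsHermitian)
    (hAP : A * P = 0) (hP : P = 1 - A * h) (hc : A * h = h * A) :
    Pᴴ = P ∧ P ^ 2 = P ∧ A * P = 0 ∧ P.rank = n - A.rank ∧ IsUnit ((1 - P) * A + P) := by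
  have hPA : P * A = 0 := by
    rw [← hAP, hP, sub_mul, mul_sub, one_mul, mul_one, hc, ← mul_assoc, hc]
  have hAPs : A * Pᴴ = 0 := by
    have := congrArg conjTranspose hPA
    rwa [conjTranspose_mul, hA.eq, conjTranspose_zero] at this
  have hPPs : P * Pᴴ = Pᴴ := by
    calc P * Pᴴ = (1 - h * A) * Pᴴ := by rw [← hc, ← hP]
      _ = Pᴴ := by rw [sub_mul, one_mul, mul_assoc, hAPs, mul_zero, sub_zero]
  have hherm : Pᴴ = P := by
    have := congrArg conjTranspose hPPs
    rw [conjTranspose_mul, conjTranspose_conjTranspose, hPPs] at this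
    exact this
  have hPP : P * P = P := by rwa [hherm] at hPPs
  refine ⟨hherm, by rw [pow_two, hPP], hAP, ?_, ?_⟩
  · have hker : LinearMap.range P.mulVecLin = LinearMap.ker A.mulVecLin := by
      ext v
      simp only [LinearMap.mem_range, LinearMap.mem_ker, mulVecLin_apply]
      constructor
      · rintro ⟨w, rfl⟩
        rw [mulVec_mulVec, hAP, zero_mulVec]
      · intro hv
        refine ⟨v, ?_⟩
        rw [hP, hc, sub_mulVec, ← mulVec_mulVec, hv, one_mulVec, mulVec_zero, sub_zero]
    have hdim := LinearMap.finrank_range_add_finrank_ker A.mulVecLin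
    rw [← hker, Module.finrank_fin_fun] at hdim
    change A.rank + P.rank = n at hdim
    omega
  · refine IsUnit.of_mul_eq_one (P + (1 - P) * h) ?_
    have hAh : A * h = 1 - P := by rw [hP, sub_sub_cancel]
    calc ((1 - P) * A + P) * (P + (1 - P) * h)
        = (A * P) + A * h - A * P * h - P * A * P - P * A * (1 - P) * h
          + P * P + P * h - P * P * h := by noncomm_ring
      _ = 1 := by rw [hAP, hPA, hPP, hAh]; simp

section Smoothness

variable {n : ℕ} {F G : ℝ → Matrix (Fin n) (Fin n) ℂ}

/-- `C¹` regularity of a matrix family, taken entrywise. -/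
def EntrywiseC1 (F : ℝ → Matrix (Fin n) (Fin n) ℂ) : Prop :=
  ∀ i j, ContDiff ℝ 1 fun a => F a i j

lemma EntrywiseC1.mul (hF : EntrywiseC1 F) (hG : EntrywiseC1 G) :
    EntrywiseC1 fun a => F a * G a := fun i j => by
  simp only [Matrix.mul_apply]
  exact ContDiff.sum fun k _ => (hF i k).mul (hG k j)

lemma EntrywiseC1.add (hF : EntrywiseC1 F) (hG : EntrywiseC1 G) :
    EntrywiseC1 fun a => F a + G a := fun i j => (hF i j).add (hG i j)

lemma EntrywiseC1.sub (hF : EntrywiseC1 F) (hG : EntrywiseC1 G) :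
    EntrywiseC1 fun a => F a - G a := fun i j => (hF i j).sub (hG i j)

lemma EntrywiseC1.const (M : Matrix (Fin n) (Fin n) ℂ) : EntrywiseC1 fun _ => M :=
  fun _ _ => contDiff_const

lemma EntrywiseC1.pow (hF : EntrywiseC1 F) (k : ℕ) : EntrywiseC1 fun a => F a ^ k := by
  induction k with
  | zero => simpa using EntrywiseC1.const 1
  | succ k ih => simpa only [pow_succ] using ih.mul hF

lemma EntrywiseC1.charpoly_coeff (hF : EntrywiseC1 F) (k : ℕ) :
    ContDiff ℝ 1 fun a => (F a).charpoly.coeff k := by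
  have hpoly : ∀ p : MvPolynomial (Fin n × Fin n) ℂ,
      ContDiff ℝ 1 fun a => MvPolynomial.eval (fun ij => F a ij.1 ij.2) p := by
    intro p
    induction p using MvPolynomial.induction_on with
    | C c => simpa using contDiff_const
    | add p q hp hq => simpa using hp.add hq
    | mul_X p ij hp => simpa using hp.mul (hF ij.1 ij.2)
  convert hpoly ((charpoly.univ ℂ (Fin n)).coeff k) using 2 with a
  exact (charpoly.univ_coeff_eval₂Hom (Fin n) (RingHom.id ℂ) (fun ij => F a ij.1 ij.2) k).symm

lemma EntrywiseC1.hasDerivAt (hF : EntrywiseC1 F) :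
    (∀ (a : ℝ) (i j : Fin n), HasDerivAt (fun b => F b i j) (deriv (fun b => F b i j) a) a) ∧
      ∀ i j : Fin n, Continuous fun a => deriv (fun b => F b i j) a :=
  ⟨fun a i j => ((contDiff_one_iff_deriv.1 (hF i j)).1 a).hasDerivAt,
    fun i j => (contDiff_one_iff_deriv.1 (hF i j)).2⟩

end Smoothness

/-- With `χ` the characteristic polynomial of `A`, this is `χ_m⁻¹ q(A)`, where `q = ∑ χ_{k+m} X^k` is
the quotient of `χ` by `X ^ m`. Where `χ_m = 0` it is `0` by the convention `0⁻¹ = 0`. -/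
noncomputable def kerProj {n : ℕ} (m : ℕ) (A : Matrix (Fin n) (Fin n) ℂ) :
    Matrix (Fin n) (Fin n) ℂ :=
  (A.charpoly.coeff m)⁻¹ • ∑ k ∈ Finset.range (n + 1), A.charpoly.coeff (k + m) • A ^ k

lemma kerProj_props {n : ℕ} {A : Matrix (Fin n) (Fin n) ℂ} (hA : A.IsHermitian) :
    A.charpoly.coeff (n - A.rank) ≠ 0 ∧
    ∃ h, A * kerProj (n - A.rank) A = 0 ∧ kerProj (n - A.rank) A = 1 - A * h ∧
      A * h = h * A := by
  obtain ⟨q, hq, hq0⟩ := charpoly_factor hA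
  generalize n - A.rank = m at hq ⊢
  have hcoeff : ∀ k, A.charpoly.coeff (k + m) = q.coeff k := fun k => by
    rw [hq, coeff_X_pow_mul]
  have hm : A.charpoly.coeff m = q.coeff 0 := by rw [← hcoeff, zero_add]
  have hdeg : q.natDegree < n + 1 := by
    have h1 : A.charpoly.natDegree = n := by simp [charpoly_natDegree_eq_dim]
    have hqne : q ≠ 0 := fun h => hq0 (by simp [h])
    rw [hq, natDegree_X_pow_mul _ hqne] at h1
    omega
  have hP : kerProj m A = (q.coeff 0)⁻¹ • aeval A q := by
    simp only [kerProj, hcoeff, hm, aeval_eq_sum_range' hdeg]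
  have hAq : A * aeval A q = 0 := by
    refine mul_eq_zero_of_pow_mul_eq_zero hA m ?_
    have := A.aeval_self_charpoly
    rwa [hq, map_mul, map_pow, aeval_X] at this
  refine ⟨hm ▸ hq0, -((q.coeff 0)⁻¹ • aeval A q.divX), ?_, ?_, ?_⟩
  · rw [hP, Matrix.mul_smul, hAq, smul_zero]
  · have hsplit : aeval A q = aeval A (X * q.divX + C (q.coeff 0)) := by rw [X_mul_divX_add]
    rw [hP, hsplit, map_add, map_mul, aeval_X, aeval_C, smul_add, Algebra.algebraMap_eq_smul_one, smul_smul,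
      inv_mul_cancel₀ hq0, one_smul, mul_neg, sub_neg_eq_add, Matrix.mul_smul, add_comm]
  · have hcomm : A * aeval A q.divX = aeval A q.divX * A := by
      have := congrArg (aeval A) (mul_comm X q.divX)
      rwa [map_mul, map_mul, aeval_X] at this
    rw [mul_neg, neg_mul, Matrix.mul_smul, Matrix.smul_mul, hcomm]

/-- For a `C¹` family `a ↦ A(a)` of Hermitian `n × n`
complex matrices of constant rank, the orthogonal projections `P(a)` onto
`ker A(a)` form a `C¹` family, and the modified family
`Ã(a) = (1 - P(a))·A(a) + P(a)` is `C¹` and pointwise invertible.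
(Differentiability of matrix families is taken entrywise, with continuous
derivative.) -/
theorem statement14 (n : ℕ) (A A' : ℝ → Matrix (Fin n) (Fin n) ℂ)
    (hA : ∀ (a : ℝ) (i j : Fin n), HasDerivAt (fun b => A b i j) (A' a i j) a)
    (hA' : ∀ i j : Fin n, Continuous fun a => A' a i j)
    (hherm : ∀ a : ℝ, (A a).IsHermitian)
    (hrank : ∃ r : ℕ, ∀ a : ℝ, (A a).rank = r) :
    ∃ P P' : ℝ → Matrix (Fin n) (Fin n) ℂ,
      (∀ (a : ℝ) (i j : Fin n), HasDerivAt (fun b => P b i j) (P' a i j) a) ∧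
      (∀ i j : Fin n, Continuous fun a => P' a i j) ∧
      (∀ a : ℝ, (P a)ᴴ = P a ∧ P a ^ 2 = P a ∧ A a * P a = 0 ∧
        (P a).rank = n - (A a).rank) ∧
      ∃ Q' : ℝ → Matrix (Fin n) (Fin n) ℂ,
        (∀ (a : ℝ) (i j : Fin n),
          HasDerivAt (fun b => ((1 - P b) * A b + P b) i j) (Q' a i j) a) ∧
        (∀ i j : Fin n, Continuous fun a => Q' a i j) ∧
        ∀ a : ℝ, IsUnit ((1 - P a) * A a + P a) := by
  obtain ⟨r, hr⟩ := hrank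
  have hAC : EntrywiseC1 A := fun i j => by
    refine contDiff_one_iff_deriv.2 ⟨fun a => (hA a i j).differentiableAt, ?_⟩
    rw [funext fun a => (hA a i j).deriv]
    exact hA' i j
  have hne : ∀ a, (A a).charpoly.coeff (n - r) ≠ 0 := fun a => by
    simpa only [hr a] using (kerProj_props (hherm a)).1
  have hPC : EntrywiseC1 fun a => kerProj (n - r) (A a) := fun i j => by
    simp only [kerProj, Matrix.smul_apply, Matrix.sum_apply, smul_eq_mul]
    exact ((hAC.charpoly_coeff _).inv hne).mul
      (ContDiff.sum fun k _ => (hAC.charpoly_coeff _).mul (hAC.pow k i j))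
  have hprops : ∀ a, (kerProj (n - r) (A a))ᴴ = kerProj (n - r) (A a) ∧
      kerProj (n - r) (A a) ^ 2 = kerProj (n - r) (A a) ∧ A a * kerProj (n - r) (A a) = 0 ∧
      (kerProj (n - r) (A a)).rank = n - r ∧
      IsUnit ((1 - kerProj (n - r) (A a)) * A a + kerProj (n - r) (A a)) := fun a => by
    obtain ⟨-, h, h1, h2, h3⟩ := kerProj_props (hherm a)
    have := projection_props (hherm a) h1 h2 h3
    rwa [hr a] at this
  have hQC : EntrywiseC1 fun a =>
      (1 - kerProj (n - r) (A a)) * A a + kerProj (n - r) (A a) :=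
    (((EntrywiseC1.const 1).sub hPC).mul hAC).add hPC
  refine ⟨fun a => kerProj (n - r) (A a), fun a => of fun i j => deriv _ a, hPC.hasDerivAt.1,
    hPC.hasDerivAt.2, fun a => ?_, fun a => of fun i j => deriv _ a, hQC.hasDerivAt.1,
    hQC.hasDerivAt.2, fun a => (hprops a).2.2.2.2⟩
  obtain ⟨h1, h2, h3, h4, -⟩ := hprops a
  exact ⟨h1, h2, h3, by rw [h4, hr a]⟩
end
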